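/- Let K be a field and I a nonzero ideal of K[x,y] with reduced minimal lexicographic Gröbner basis G = (g_0,…,g_s) (for x ≺ y) and associated detaching sequence (A_i). Then for every n ≥ n_s, the K[x]-module I_{≤(.,n)} = {f ∈ I : deg_y(f) ≤ n} is a free K[x]-module of rank n − n_s + 1, with basis A_{n_s},…,A_n. -/

import Mathlib

noncomputable section

open Polynomial

/-- Bivariate polynomials `k[x][y]`: the inner `X` is `x`, the outer `X` is `y`. -/
abbrev Biv (k : Type*) [CommRing k] : Type _ := Polynomial (Polynomial k)

variable {k : Type*} [CommRing k]

/-- The leading monomial of `f`, as the pair (y-exponent, x-exponent), for the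
lexicographic order induced by `x ≺ y`. -/
def lmon (f : Biv k) : ℕ × ℕ := (f.natDegree, f.leadingCoeff.natDegree)

/-- Divisibility of monomials: `x^{p.2} y^{p.1}` divides `x^{q.2} y^{q.1}`. -/
def monDvd (p q : ℕ × ℕ) : Prop := p.1 ≤ q.1 ∧ p.2 ≤ q.2

/-- Lexicographic comparison of monomials, `y`-exponent first. -/
def monLt (p q : ℕ × ℕ) : Prop := p.1 < q.1 ∨ (p.1 = q.1 ∧ p.2 < q.2)

/-- The monomial `x^{m.2} y^{m.1}` occurs in `f` (has a nonzero coefficient). -/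
def occursIn (f : Biv k) (m : ℕ × ℕ) : Prop := (f.coeff m.1).coeff m.2 ≠ 0

/-- `G` is a Gröbner basis of `I` for the lexicographic order with `x ≺ y`:
its elements are nonzero elements of `I`, and the leading monomial of any nonzero
element of `I` is divisible by the leading monomial of some element of `G`. -/
def IsGB (G : List (Biv k)) (I : Ideal (Biv k)) : Prop :=
  (∀ g ∈ G, g ≠ 0 ∧ g ∈ I) ∧
  ∀ f ∈ I, f ≠ 0 → ∃ g ∈ G, monDvd (lmon g) (lmon f)

/-- `f` is monic w.r.t. lex `x ≺ y`: the coefficient of its leading monomial is `1`. -/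
def lexMonic (f : Biv k) : Prop := f.leadingCoeff.Monic

/-- `g 0, …, g s` is the reduced minimal lexicographic Gröbner basis of `I`,
listed in decreasing order of leading monomials. -/
def IsReducedGB {s : ℕ} (g : Fin (s + 1) → Biv k) (I : Ideal (Biv k)) : Prop :=
  IsGB (List.ofFn g) I ∧
  (∀ j, lexMonic (g j)) ∧
  (∀ j l, j ≠ l → ∀ m : ℕ × ℕ, occursIn (g j) m → ¬ monDvd (lmon (g l)) m) ∧
  (∀ j l : Fin (s + 1), j < l → monLt (lmon (g l)) (lmon (g j)))

/-- Every monomial of `f` of `y`-degree `< i` is reduced w.r.t. the family `g`. -/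
def reducedBelow {s : ℕ} (g : Fin (s + 1) → Biv k) (i : ℕ) (f : Biv k) : Prop :=
  ∀ m : ℕ × ℕ, m.1 < i → occursIn f m → ∀ j, ¬ monDvd (lmon (g j)) m

/-- `A` is the detaching sequence associated to the reduced Gröbner basis `g` of `I`:
`A i = 0` for `i < n_s`, `A (n_j) = g j`, and otherwise `A i` is obtained from
`y * A (i-1)` by reducing the terms of `y`-degree `< i` modulo `g`
(so `A i - y * A (i-1)` lies in `I` and has `y`-degree `< i`, and the part of `A i`
of `y`-degree `< i` is reduced w.r.t. `g`). -/
def IsDetachingSeq {s : ℕ} (g : Fin (s + 1) → Biv k) (I : Ideal (Biv k))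
    (A : ℕ → Biv k) : Prop :=
  (∀ i, i < (g (Fin.last s)).natDegree → A i = 0) ∧
  (∀ j, A ((g j).natDegree) = g j) ∧
  (∀ i, (g (Fin.last s)).natDegree ≤ i → (∀ j, (g j).natDegree ≠ i) →
    (A i - Polynomial.X * A (i - 1)) ∈ I ∧
    (A i - Polynomial.X * A (i - 1)).degree < (i : WithBot ℕ) ∧
    reducedBelow g i (A i))

/-- The `K[x]`-submodule `I_{≤(.,n)}` of `K[x,y] = K[x][y]` consisting of the elements
of `I` of `y`-degree at most `n`. -/
def ydegLE {K : Type*} [Field K] (I : Ideal (Biv K)) (n : ℕ) :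
    Submodule (Polynomial K) (Biv K) where
  carrier := {f | f ∈ I ∧ f.natDegree ≤ n}
  add_mem' := by
    rintro f g ⟨hfI, hfd⟩ ⟨hgI, hgd⟩
    exact ⟨I.add_mem hfI hgI, le_trans (Polynomial.natDegree_add_le f g) (max_le hfd hgd)⟩
  zero_mem' := ⟨I.zero_mem, by simp⟩
  smul_mem' := by
    rintro c f ⟨hfI, hfd⟩
    rw [Set.mem_setOf_eq, Polynomial.smul_eq_C_mul]
    refine ⟨I.mul_mem_left _ hfI, le_trans Polynomial.natDegree_mul_le ?_⟩
    simpa using hfd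

namespace IsReducedGB

variable {K : Type*} [Field K] {s : ℕ} {I : Ideal (Biv K)} {g : Fin (s + 1) → Biv K}

theorem mem (hg : IsReducedGB g I) (j : Fin (s + 1)) : g j ∈ I :=
  (hg.1.1 (g j) (List.mem_ofFn.2 ⟨j, rfl⟩)).2

theorem ne_zero (hg : IsReducedGB g I) (j : Fin (s + 1)) : g j ≠ 0 :=
  (hg.1.1 (g j) (List.mem_ofFn.2 ⟨j, rfl⟩)).1

theorem exists_monDvd (hg : IsReducedGB g I) {f : Biv K} (hf : f ∈ I) (hf0 : f ≠ 0) :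
    ∃ j, monDvd (lmon (g j)) (lmon f) := by
  obtain ⟨h, hh, hd⟩ := hg.1.2 f hf hf0
  obtain ⟨j, rfl⟩ := List.mem_ofFn.1 hh
  exact ⟨j, hd⟩

theorem natDegree_last_le (hg : IsReducedGB g I) (j : Fin (s + 1)) :
    (g (Fin.last s)).natDegree ≤ (g j).natDegree := by
  rcases (Fin.le_last j).eq_or_lt with rfl | hj
  · exact le_rfl
  · rcases hg.2.2.2 j _ hj with h | h
    · exact h.le
    · exact h.1.le

theorem natDegree_last_le_of_mem (hg : IsReducedGB g I) {f : Biv K} (hf : f ∈ I)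
    (hf0 : f ≠ 0) : (g (Fin.last s)).natDegree ≤ f.natDegree := by
  obtain ⟨j, hj⟩ := hg.exists_monDvd hf hf0
  exact (hg.natDegree_last_le j).trans hj.1

/-- Leading coefficients of a reduced Gröbner basis drop in degree as the `y`-degree grows. -/
theorem natDegree_leadingCoeff_le (hg : IsReducedGB g I) {j l : Fin (s + 1)}
    (h : (g j).natDegree ≤ (g l).natDegree) :
    (g l).leadingCoeff.natDegree ≤ (g j).leadingCoeff.natDegree := by
  rcases eq_or_ne l j with rfl | hlj
  · exact le_rfl
  · by_contra! hlt
    refine hg.2.2.1 l j hlj (lmon (g l)) ?_ ⟨h, hlt.le⟩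
    have h0 : (g l).leadingCoeff.leadingCoeff ≠ 0 := by simpa using hg.ne_zero l
    exact h0

end IsReducedGB

namespace IsDetachingSeq

variable {K : Type*} [Field K] {s : ℕ} {I : Ideal (Biv K)} {g : Fin (s + 1) → Biv K}
  {A : ℕ → Biv K}

theorem mem_and_degree_eq_and_natDegree_leadingCoeff_le (hg : IsReducedGB g I)
    (hA : IsDetachingSeq g I A) {i : ℕ} (hi : (g (Fin.last s)).natDegree ≤ i) :
    A i ∈ I ∧ (A i).degree = i ∧
      ∀ j, (g j).natDegree ≤ i → (A i).leadingCoeff.natDegree ≤ (g j).leadingCoeff.natDegree := by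
  induction i, hi using Nat.le_induction with
  | base =>
    rw [hA.2.1]
    exact ⟨hg.mem _, degree_eq_natDegree (hg.ne_zero _),
      fun j hj => hg.natDegree_leadingCoeff_le hj⟩
  | succ i hi ih =>
    by_cases hgap : ∃ l, (g l).natDegree = i + 1
    · obtain ⟨l, hl⟩ := hgap
      rw [← hl, hA.2.1]
      exact ⟨hg.mem _, degree_eq_natDegree (hg.ne_zero _),
        fun j hj => hg.natDegree_leadingCoeff_le hj⟩
    · push Not at hgap
      obtain ⟨hmem, hdeg, -⟩ := hA.2.2 (i + 1) (hi.trans i.le_succ) hgap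
      obtain ⟨ihI, ihdeg, ihle⟩ := ih
      rw [Nat.add_sub_cancel] at hmem hdeg
      have hX : (X * A i).degree = ((i + 1 : ℕ) : WithBot ℕ) := by
        rw [X_mul, degree_mul_X, ihdeg]
        rfl
      have hlt : (A (i + 1) - X * A i).degree < (X * A i).degree := hX ▸ hdeg
      have hsum : A (i + 1) = (A (i + 1) - X * A i) + X * A i := by ring
      refine ⟨?_, ?_, fun j hj => ?_⟩
      · rw [hsum]
        exact I.add_mem hmem (I.mul_mem_left _ ihI)
      · rw [hsum, degree_add_eq_right_of_degree_lt hlt, hX]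
      · rw [hsum, leadingCoeff_add_of_degree_lt hlt, X_mul, leadingCoeff_mul_X]
        exact ihle j (Nat.le_of_lt_succ (lt_of_le_of_ne hj (hgap j)))

theorem mem (hg : IsReducedGB g I) (hA : IsDetachingSeq g I A) {i : ℕ}
    (hi : (g (Fin.last s)).natDegree ≤ i) : A i ∈ I :=
  (hA.mem_and_degree_eq_and_natDegree_leadingCoeff_le hg hi).1

theorem degree_eq (hg : IsReducedGB g I) (hA : IsDetachingSeq g I A) {i : ℕ}
    (hi : (g (Fin.last s)).natDegree ≤ i) : (A i).degree = i :=
  (hA.mem_and_degree_eq_and_natDegree_leadingCoeff_le hg hi).2.1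

/-- The leading coefficient of `A i` has minimal degree among those of the elements of `I`
of `y`-degree `i`. -/
theorem natDegree_leadingCoeff_le_of_mem (hg : IsReducedGB g I) (hA : IsDetachingSeq g I A)
    {f : Biv K} (hf : f ∈ I) (hf0 : f ≠ 0) :
    (A f.natDegree).leadingCoeff.natDegree ≤ f.leadingCoeff.natDegree := by
  obtain ⟨j, hj⟩ := hg.exists_monDvd hf hf0
  exact ((hA.mem_and_degree_eq_and_natDegree_leadingCoeff_le hg
    (hg.natDegree_last_le_of_mem hf hf0)).2.2 j hj.1).trans hj.2

theorem leadingCoeff_dvd (hg : IsReducedGB g I) (hA : IsDetachingSeq g I A)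
    {f : Biv K} (hf : f ∈ I) (hf0 : f ≠ 0) :
    (A f.natDegree).leadingCoeff ∣ f.leadingCoeff := by
  have hi := hg.natDegree_last_le_of_mem hf hf0
  set c := (A f.natDegree).leadingCoeff with hc
  have hdeg := hA.degree_eq hg hi
  have hnat : (A f.natDegree).natDegree = f.natDegree := natDegree_eq_of_degree_eq_some hdeg
  have hc0 : c ≠ 0 := by
    rw [hc, Ne, leadingCoeff_eq_zero]
    intro h
    simp [h] at hdeg
  rw [← EuclideanDomain.mod_eq_zero]
  by_contra hr
  set h := f - C (f.leadingCoeff / c) * A f.natDegree with hh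
  have hcoeff : h.coeff f.natDegree = f.leadingCoeff % c := by
    have hAc : (A f.natDegree).coeff f.natDegree = c := by rw [hc, leadingCoeff, hnat]
    rw [hh, coeff_sub, coeff_C_mul, hAc, EuclideanDomain.mod_eq_sub_mul_div, mul_comm c,
      coeff_natDegree]
  have hle : h.natDegree ≤ f.natDegree :=
    (natDegree_sub_le _ _).trans (max_le le_rfl ((natDegree_C_mul_le _ _).trans hnat.le))
  have heq : h.natDegree = f.natDegree :=
    natDegree_eq_of_le_of_coeff_ne_zero hle (hcoeff ▸ hr)
  have hh0 : h ≠ 0 := by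
    intro h0
    rw [h0, coeff_zero] at hcoeff
    exact hr hcoeff.symm
  have hhI : h ∈ I := I.sub_mem hf (I.mul_mem_left _ (hA.mem hg hi))
  have hlc : h.leadingCoeff = f.leadingCoeff % c := by rw [leadingCoeff, heq, hcoeff]
  have hmin := hA.natDegree_leadingCoeff_le_of_mem hg hhI hh0
  rw [heq, hlc] at hmin
  exact (natDegree_lt_natDegree hr (EuclideanDomain.mod_lt _ hc0)).not_ge hmin

theorem mem_span (hg : IsReducedGB g I) (hA : IsDetachingSeq g I A) {n : ℕ} {f : Biv K}
    (hf : f ∈ I) (hn : f.natDegree ≤ n) :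
    f ∈ Submodule.span K[X] (A '' Set.Icc (g (Fin.last s)).natDegree n) := by
  induction hd : f.degree using WellFoundedLT.induction generalizing f with
  | ind d ih =>
    subst hd
    rcases eq_or_ne f 0 with rfl | hf0
    · exact Submodule.zero_mem _
    have hi := hg.natDegree_last_le_of_mem hf hf0
    obtain ⟨q, hq⟩ := hA.leadingCoeff_dvd hg hf hf0
    have hAspan : A f.natDegree ∈
        Submodule.span K[X] (A '' Set.Icc (g (Fin.last s)).natDegree n) :=
      Submodule.subset_span ⟨_, ⟨hi, hn⟩, rfl⟩
    have hq0 : q ≠ 0 := by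
      rintro rfl
      exact hf0 (leadingCoeff_eq_zero.1 (by simpa using hq))
    have hlt : (f - q • A f.natDegree).degree < f.degree := by
      refine degree_sub_lt_left ?_ hf0 ?_
      · rw [smul_eq_C_mul, degree_C_mul hq0, hA.degree_eq hg hi, degree_eq_natDegree hf0]
      · rw [smul_eq_C_mul, leadingCoeff_mul, leadingCoeff_C, hq, mul_comm]
    rw [← sub_add_cancel f (q • A f.natDegree)]
    refine Submodule.add_mem _ (ih _ hlt ?_ ?_ rfl) (Submodule.smul_mem _ q hAspan)
    · rw [smul_eq_C_mul]
      exact I.sub_mem hf (I.mul_mem_left _ (hA.mem hg hi))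
    · exact (natDegree_le_natDegree hlt.le).trans hn

theorem linearIndependent (hg : IsReducedGB g I) (hA : IsDetachingSeq g I A) :
    LinearIndependent K[X] fun j : ℕ => A ((g (Fin.last s)).natDegree + j) := by
  let S : Polynomial.Sequence K[X] :=
    { elems' := fun i => if (g (Fin.last s)).natDegree ≤ i then A i else X ^ i
      degree_eq' := fun i => by
        split_ifs with h
        · exact hA.degree_eq hg h
        · exact degree_X_pow i }
  have hS : ∀ j, S ((g (Fin.last s)).natDegree + j) = A ((g (Fin.last s)).natDegree + j) :=
    fun j => if_pos (Nat.le_add_right _ _)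
  simpa only [Function.comp_def, hS] using
    S.linearIndependent.comp _ (add_right_injective (g (Fin.last s)).natDegree)

end IsDetachingSeq

/-- For a nonzero ideal `I` of `K[x,y]` with reduced minimal lexicographic
Gröbner basis `g = (g_0, …, g_s)` (for `x ≺ y`) and associated detaching sequence `A`,
for every `n ≥ n_s` the `K[x]`-module `I_{≤(.,n)}` is free of rank `n - n_s + 1`,
with basis `A_{n_s}, …, A_n`. -/
theorem detaching_basis_free {K : Type*} [Field K] {s : ℕ}
    (I : Ideal (Biv K)) (hI : I ≠ ⊥)
    (g : Fin (s + 1) → Biv K) (hg : IsReducedGB g I)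
    (A : ℕ → Biv K) (hA : IsDetachingSeq g I A)
    (n : ℕ) (hn : (g (Fin.last s)).natDegree ≤ n) :
    ∃ b : Module.Basis (Fin (n - (g (Fin.last s)).natDegree + 1)) (Polynomial K) (ydegLE I n),
      ∀ j, (b j : Biv K) = A ((g (Fin.last s)).natDegree + (j : ℕ)) := by
  have hmem (j : Fin (n - (g (Fin.last s)).natDegree + 1)) :
      A ((g (Fin.last s)).natDegree + (j : ℕ)) ∈ ydegLE I n := by
    have hj := Nat.le_add_right (g (Fin.last s)).natDegree (j : ℕ)
    refine ⟨hA.mem hg hj, ?_⟩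
    rw [natDegree_eq_of_degree_eq_some (hA.degree_eq hg hj)]
    omega
  let v (j : Fin (n - (g (Fin.last s)).natDegree + 1)) : ydegLE I n := ⟨_, hmem j⟩
  have hli : LinearIndependent K[X] v :=
    LinearIndependent.of_comp (ydegLE I n).subtype
      ((hA.linearIndependent hg).comp _ Fin.val_injective)
  have hspan : ⊤ ≤ Submodule.span K[X] (Set.range v) := by
    intro f _
    have hf : (ydegLE I n).subtype f ∈
        (Submodule.span K[X] (Set.range v)).map (ydegLE I n).subtype := by
      rw [Submodule.map_span]
      refine Submodule.span_mono ?_ (hA.mem_span hg f.2.1 f.2.2)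
      rintro _ ⟨i, ⟨hi, hin⟩, rfl⟩
      refine ⟨_, ⟨⟨i - (g (Fin.last s)).natDegree, by omega⟩, rfl⟩, ?_⟩
      simp [v, Nat.add_sub_cancel' hi]
    obtain ⟨p, hp, heq⟩ := hf
    exact (ydegLE I n).subtype_injective heq ▸ hp
  exact ⟨Module.Basis.mk hli hspan, fun j => by simp [v]⟩
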